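/- For every positive integer n, there exist a constant C > 0 and a real x₀ ≥ 3 such that for all real x ≥ x₀, π_{2n}(x) ≤ C · x (log log x)² / (log x)². -/

import Mathlib

/-- `primePairCounting n x` is the number of primes `p ≤ x` such that `p + 2n`
is also prime. -/
noncomputable def primePairCounting (n : ℕ) (x : ℝ) : ℕ :=
  ((Finset.Icc 1 ⌊x⌋₊).filter (fun p => p.Prime ∧ (p + 2 * n).Prime)).card

/-!
Sift the pairs `a, a + h` with `a ≤ x` by the primes `p ≤ z` not dividing `h`, each of which forbids
two residue classes. Inclusion–exclusion over all sets of such primes has too many terms, so it is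
truncated at an even level `m ≍ log log x`, which still gives an upper bound (Bonferroni). By the
Chinese remainder theorem each remaining term is computed with error at most `2 ^ m`, for a total
error `O(z ^ m)`. Completing the truncated main term to `∏ p, (1 - 2 / p) ≪ (log z) ^ (-2)` costs
`exp (O(log log z) - m)`, by Rankin's trick and Chebyshev's bound for `∑ p ≤ z, 1 / p`. The choice
`log z = log x / (56 log log x)` keeps both errors negligible, and the main term is then
`x / (log z) ^ 2 ≍ x (log log x) ^ 2 / (log x) ^ 2`.
-/

section

open Finset Real Filter

section CombinatorialSieve

variable {ι α : Type*}

lemma sum_powerset_card_le_eq_sum_range {M : Type*} [AddCommMonoid M] (s : Finset ι) (m : ℕ)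
    (f : ℕ → M) :
    ∑ I ∈ s.powerset with #I ≤ m, f #I = ∑ k ∈ range (m + 1), (#s).choose k • f k := by
  have card_mem_range : ∀ I ∈ {I ∈ s.powerset | #I ≤ m}, #I ∈ range (m + 1) := fun I hI ↦
    mem_range_succ_iff.2 (mem_filter.1 hI).2
  rw [← sum_fiberwise_of_maps_to card_mem_range]
  refine sum_congr rfl fun k hk ↦ ?_
  have fiber_eq : {I ∈ {I ∈ s.powerset | #I ≤ m} | #I = k} = s.powersetCard k := by
    ext I
    simp only [mem_filter, mem_powerset, mem_powersetCard]
    have := mem_range_succ_iff.1 hk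
    grind
  rw [fiber_eq, ← card_powersetCard, ← sum_const]
  exact sum_congr rfl fun I hI ↦ by rw [(mem_powersetCard.1 hI).2]

lemma ite_card_eq_zero_le_sum_powerset_card_le (s : Finset ι) {m : ℕ} (hm : Even m) :
    (if #s = 0 then 1 else 0 : ℤ) ≤ ∑ I ∈ s.powerset with #I ≤ m, (-1) ^ #I := by
  rcases s.eq_empty_or_nonempty with rfl | hs
  · simp [filter_singleton]
  obtain ⟨r, hr⟩ := Nat.exists_eq_succ_of_ne_zero hs.card_ne_zero
  have truncated_sum : ∑ I ∈ s.powerset with #I ≤ m, (-1 : ℤ) ^ #I = (-1) ^ m * r.choose m := by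
    rw [sum_powerset_card_le_eq_sum_range s m (fun k ↦ (-1 : ℤ) ^ k), hr,
      ← Int.alternating_sum_range_choose_eq_choose]
    simp only [nsmul_eq_mul, mul_comm, Nat.succ_eq_add_one]
  rw [if_neg hs.card_ne_zero, truncated_sum, hm.neg_one_pow]
  positivity

theorem card_filter_forall_not_le_sum_powerset (s : Finset α) (T : Finset ι) (P : ι → α → Prop)
    [∀ i, DecidablePred (P i)] {m : ℕ} (hm : Even m) :
    (#{a ∈ s | ∀ i ∈ T, ¬ P i a} : ℤ) ≤
      ∑ I ∈ T.powerset with #I ≤ m, (-1) ^ #I * (#{a ∈ s | ∀ i ∈ I, P i a} : ℤ) := by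
  have pointwise (a : α) : (if ∀ i ∈ T, ¬ P i a then 1 else 0 : ℤ) ≤
      ∑ I ∈ T.powerset with #I ≤ m, if ∀ i ∈ I, P i a then (-1) ^ #I else 0 := by
    have subsets_eq : {I ∈ ({i ∈ T | P i a} : Finset ι).powerset | #I ≤ m} =
        {I ∈ {I ∈ T.powerset | #I ≤ m} | ∀ i ∈ I, P i a} := by
      ext I
      simp only [mem_filter, mem_powerset]
      grind
    simpa only [card_eq_zero, filter_eq_empty_iff, subsets_eq,
      sum_filter (s := {I ∈ T.powerset | #I ≤ m})] using
        ite_card_eq_zero_le_sum_powerset_card_le {i ∈ T | P i a} hm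
  calc (#{a ∈ s | ∀ i ∈ T, ¬ P i a} : ℤ)
      = ∑ a ∈ s, if ∀ i ∈ T, ¬ P i a then 1 else 0 := by rw [sum_boole]
    _ ≤ ∑ a ∈ s, ∑ I ∈ T.powerset with #I ≤ m, if ∀ i ∈ I, P i a then (-1) ^ #I else 0 :=
        sum_le_sum fun a _ ↦ pointwise a
    _ = ∑ I ∈ T.powerset with #I ≤ m, (-1) ^ #I * (#{a ∈ s | ∀ i ∈ I, P i a} : ℤ) := by
        rw [sum_comm]
        refine sum_congr rfl fun I _ ↦ ?_
        rw [← sum_filter, sum_const, nsmul_eq_mul, mul_comm]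

lemma sum_powerset_prod_le_exp_sum (T : Finset ι) (g : ι → ℝ) (hg : ∀ i ∈ T, 0 ≤ g i) :
    ∑ I ∈ T.powerset, ∏ i ∈ I, g i ≤ exp (∑ i ∈ T, g i) := by
  classical
  rw [← prod_one_add, exp_sum]
  refine prod_le_prod (fun i hi ↦ ?_) fun i _ ↦ ?_
  · linarith [hg i hi]
  · linarith [add_one_le_exp (g i)]

lemma sum_powerset_lt_card_prod_le_exp (T : Finset ι) (g : ι → ℝ) (hg : ∀ i ∈ T, 0 ≤ g i)
    (m : ℕ) :
    ∑ I ∈ T.powerset with ¬ #I ≤ m, ∏ i ∈ I, g i ≤ exp (exp 1 * ∑ i ∈ T, g i - m) := by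
  have prod_nonneg_of_mem {I : Finset ι} (hI : I ∈ T.powerset) : 0 ≤ ∏ i ∈ I, g i :=
    prod_nonneg fun i hi ↦ hg i (mem_powerset.1 hI hi)
  -- Rankin's trick: the weight `exp (#I - m)` is at least `1` on the sets of the tail.
  have prod_exp_mul (I : Finset ι) :
      exp (#I - m) * ∏ i ∈ I, g i = exp (-m) * ∏ i ∈ I, exp 1 * g i := by
    rw [prod_mul_distrib, prod_const, ← exp_nat_mul, mul_one, sub_eq_neg_add, exp_add, mul_assoc]
  calc ∑ I ∈ T.powerset with ¬ #I ≤ m, ∏ i ∈ I, g i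
      ≤ ∑ I ∈ T.powerset with ¬ #I ≤ m, exp (#I - m) * ∏ i ∈ I, g i := by
        refine sum_le_sum fun I hI ↦ ?_
        obtain ⟨hIT, hIm⟩ := mem_filter.1 hI
        have : (m : ℝ) ≤ #I := by exact_mod_cast (not_le.1 hIm).le
        exact le_mul_of_one_le_left (prod_nonneg_of_mem hIT) (one_le_exp (sub_nonneg.2 this))
    _ ≤ ∑ I ∈ T.powerset, exp (#I - m) * ∏ i ∈ I, g i :=
        sum_le_sum_of_subset_of_nonneg (filter_subset _ _) fun I hI _ ↦
          mul_nonneg (exp_nonneg _) (prod_nonneg_of_mem hI)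
    _ = exp (-m) * ∑ I ∈ T.powerset, ∏ i ∈ I, exp 1 * g i := by
        simp only [prod_exp_mul, mul_sum]
    _ ≤ exp (-m) * exp (∑ i ∈ T, exp 1 * g i) := by
        gcongr
        exact sum_powerset_prod_le_exp_sum T _ fun i hi ↦ mul_nonneg (exp_nonneg 1) (hg i hi)
    _ = exp (exp 1 * ∑ i ∈ T, g i - m) := by
        rw [← exp_add, ← mul_sum, neg_add_eq_sub]

lemma sum_powerset_card_le_prod_le (T : Finset ι) (g : ι → ℝ) (hg : ∀ i ∈ T, 0 ≤ g i) (m : ℕ) :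
    ∑ I ∈ T.powerset with #I ≤ m, (-1) ^ #I * ∏ i ∈ I, g i ≤
      ∏ i ∈ T, (1 - g i) + exp (exp 1 * ∑ i ∈ T, g i - m) := by
  have full_sum : ∏ i ∈ T, (1 - g i) = ∑ I ∈ T.powerset, (-1) ^ #I * ∏ i ∈ I, g i := by
    classical
    simp only [sub_eq_add_neg, prod_one_add, prod_neg]
  have neg_tail_le : -∑ I ∈ T.powerset with ¬ #I ≤ m, (-1) ^ #I * ∏ i ∈ I, g i ≤
      ∑ I ∈ T.powerset with ¬ #I ≤ m, ∏ i ∈ I, g i := by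
    rw [← sum_neg_distrib]
    refine sum_le_sum fun I hI ↦ ?_
    have hIT := mem_powerset.1 (mem_filter.1 hI).1
    have : 0 ≤ ∏ i ∈ I, g i := prod_nonneg fun i hi ↦ hg i (hIT hi)
    rcases neg_one_pow_eq_or ℝ #I with h | h <;> rw [h] <;> linarith
  rw [full_sum, ← sum_filter_add_sum_filter_not T.powerset (fun I ↦ #I ≤ m)]
  linarith [sum_powerset_lt_card_prod_le_exp T g hg m]

lemma sum_powerset_card_le_pow_card_le {T : Finset ι} {κ z : ℝ} (hκ : 0 ≤ κ) (hz : 1 ≤ z)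
    (hT : #T ≤ z) (m : ℕ) :
    ∑ I ∈ T.powerset with #I ≤ m, κ ^ #I ≤ exp κ * z ^ m := by
  have z_pos : 0 < z := by linarith
  calc ∑ I ∈ T.powerset with #I ≤ m, κ ^ #I
      ≤ ∑ I ∈ T.powerset with #I ≤ m, z ^ m * ∏ _i ∈ I, κ / z := by
        refine sum_le_sum fun I hI ↦ ?_
        rw [prod_const, div_pow, mul_div_left_comm]
        refine le_mul_of_one_le_right (by positivity) ((one_le_div (by positivity)).2 ?_)
        exact pow_le_pow_right₀ hz (mem_filter.1 hI).2
    _ ≤ ∑ I ∈ T.powerset, z ^ m * ∏ _i ∈ I, κ / z :=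
        sum_le_sum_of_subset_of_nonneg (filter_subset _ _) fun I _ _ ↦ by positivity
    _ ≤ z ^ m * exp (#T * (κ / z)) := by
        rw [← mul_sum, ← nsmul_eq_mul, ← sum_const]
        gcongr
        exact sum_powerset_prod_le_exp_sum T _ fun _ _ ↦ by positivity
    _ ≤ z ^ m * exp κ := by
        gcongr
        rw [mul_div_left_comm]
        exact mul_le_of_le_one_right hκ ((div_le_one z_pos).2 hT)
    _ = exp κ * z ^ m := mul_comm _ _

theorem card_sifted_le_brun (s : Finset α) (T : Finset ι) (P : ι → α → Prop)
    [∀ i, DecidablePred (P i)] (g : ι → ℝ) {X κ z : ℝ} {m : ℕ} (hm : Even m) (hX : 0 ≤ X)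
    (hκ : 0 ≤ κ) (hg : ∀ i ∈ T, 0 ≤ g i) (hz : 1 ≤ z) (hT : #T ≤ z)
    (hP : ∀ I ⊆ T, |#{a ∈ s | ∀ i ∈ I, P i a} - X * ∏ i ∈ I, g i| ≤ κ ^ #I) :
    #{a ∈ s | ∀ i ∈ T, ¬ P i a} ≤
      X * (∏ i ∈ T, (1 - g i) + exp (exp 1 * ∑ i ∈ T, g i - m)) + exp κ * z ^ m := by
  calc (#{a ∈ s | ∀ i ∈ T, ¬ P i a} : ℝ)
      ≤ ∑ I ∈ T.powerset with #I ≤ m, (-1) ^ #I * (#{a ∈ s | ∀ i ∈ I, P i a} : ℝ) := by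
        exact_mod_cast card_filter_forall_not_le_sum_powerset s T P hm
    _ ≤ ∑ I ∈ T.powerset with #I ≤ m, ((-1) ^ #I * (X * ∏ i ∈ I, g i) + κ ^ #I) := by
        refine sum_le_sum fun I hI ↦ ?_
        obtain ⟨lower, upper⟩ := abs_le.1 (hP I (mem_powerset.1 (mem_filter.1 hI).1))
        rcases neg_one_pow_eq_or ℝ #I with h | h <;> rw [h] <;> linarith
    _ = X * ∑ I ∈ T.powerset with #I ≤ m, (-1) ^ #I * ∏ i ∈ I, g i +
          ∑ I ∈ T.powerset with #I ≤ m, κ ^ #I := by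
        simp only [sum_add_distrib, mul_sum, mul_left_comm]
    _ ≤ X * (∏ i ∈ T, (1 - g i) + exp (exp 1 * ∑ i ∈ T, g i - m)) + exp κ * z ^ m := by
        gcongr
        · exact sum_powerset_card_le_prod_le T g hg m
        · exact sum_powerset_card_le_pow_card_le hκ hz hT m

end CombinatorialSieve

section ResidueClasses

lemma abs_card_range_natCast_eq_sub_le_one (N Q : ℕ) [NeZero Q] (c : ZMod Q) :
    |(#{a ∈ range N | ((a : ℕ) : ZMod Q) = c} : ℝ) - N / Q| ≤ 1 := by
  have card_eq_count : #{a ∈ range N | ((a : ℕ) : ZMod Q) = c} = N.count (· ≡ c.val [MOD Q]) := by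
    simp only [Nat.count_eq_card_filter_range, ← ZMod.natCast_eq_natCast_iff, ZMod.natCast_zmod_val]
  have floor_le : ((N / Q : ℕ) : ℝ) ≤ N / Q := Nat.cast_div_le
  have lt_floor_add_one : (N / Q : ℝ) < (N / Q : ℕ) + 1 := by
    rw [← Nat.floor_div_eq_div (K := ℝ)]
    exact Nat.lt_floor_add_one _
  rw [card_eq_count, Nat.count_modEq_card N (NeZero.pos Q), Nat.cast_add, abs_le]
  split_ifs <;> push_cast <;> constructor <;> linarith

theorem abs_card_range_natCast_mem_sub_le (N Q : ℕ) [NeZero Q] (S : Finset (ZMod Q)) :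
    |(#{a ∈ range N | ((a : ℕ) : ZMod Q) ∈ S} : ℝ) - N * (#S / Q)| ≤ #S := by
  have card_eq_sum : (#{a ∈ range N | ((a : ℕ) : ZMod Q) ∈ S} : ℝ) =
      ∑ c ∈ S, (#{a ∈ range N | ((a : ℕ) : ZMod Q) = c} : ℝ) := by
    have mapsTo : Set.MapsTo (fun a : ℕ ↦ (a : ZMod Q))
        ({a ∈ range N | ((a : ℕ) : ZMod Q) ∈ S} : Finset ℕ) S :=
      fun a ha ↦ (mem_filter.1 ha).2
    rw [card_eq_sum_card_fiberwise mapsTo, Nat.cast_sum]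
    refine sum_congr rfl fun c hc ↦ ?_
    rw [filter_filter]
    congr! 4
    grind
  calc |(#{a ∈ range N | ((a : ℕ) : ZMod Q) ∈ S} : ℝ) - N * (#S / Q)|
      = |∑ c ∈ S, ((#{a ∈ range N | ((a : ℕ) : ZMod Q) = c} : ℝ) - N / Q)| := by
        rw [card_eq_sum, sum_sub_distrib, sum_const, nsmul_eq_mul, mul_div_left_comm]
    _ ≤ ∑ c ∈ S, |(#{a ∈ range N | ((a : ℕ) : ZMod Q) = c} : ℝ) - N / Q| := abs_sum_le_sum_abs _ _
    _ ≤ ∑ c ∈ S, 1 := sum_le_sum fun c _ ↦ abs_card_range_natCast_eq_sub_le_one N Q c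
    _ = #S := by rw [sum_const, nsmul_one]

open Function in
theorem abs_card_range_forall_natCast_mem_sub_le {ι : Type*} [Fintype ι] (q : ι → ℕ)
    [∀ i, NeZero (q i)] (hq : Pairwise (Nat.Coprime on q)) (Ω : ∀ i, Finset (ZMod (q i))) (N : ℕ) :
    |(#{a ∈ range N | ∀ i, ((a : ℕ) : ZMod (q i)) ∈ Ω i} : ℝ) - N * ∏ i, (#(Ω i) / q i : ℝ)| ≤
      ∏ i, (#(Ω i) : ℝ) := by
  classical
  have : NeZero (∏ i, q i) := ⟨prod_ne_zero_iff.2 fun i _ ↦ NeZero.ne _⟩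
  let e := (ZMod.prodEquivPi q hq).toEquiv
  let S := (Fintype.piFinset Ω).map e.symm.toEmbedding
  have mem_iff (a : ℕ) : (∀ i, (a : ZMod (q i)) ∈ Ω i) ↔ (a : ZMod (∏ i, q i)) ∈ S := by
    simp [S, e, mem_map_equiv, Fintype.mem_piFinset]
  have card_S : (#S : ℝ) = ∏ i, (#(Ω i) : ℝ) := by
    simp only [S, card_map, Fintype.card_piFinset, Nat.cast_prod]
  simpa only [mem_iff, prod_div_distrib, card_S, Nat.cast_prod] using
    abs_card_range_natCast_mem_sub_le N _ S

end ResidueClasses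

section PrimeSums

lemma log_add_one_le_prod_primesLE_inv (n : ℕ) :
    log (n + 1) ≤ ∏ p ∈ n.primesLE, (1 - (p : ℝ)⁻¹)⁻¹ := by
  classical
  let f : ℕ →* ℝ := ⟨⟨fun n ↦ (n : ℝ)⁻¹, by simp⟩, fun a b ↦ by push_cast; exact mul_inv _ _⟩
  have norm_f_lt_one {p : ℕ} (hp : p.Prime) : ‖f p‖ < 1 := by
    simpa [f] using inv_lt_one_of_one_lt₀ (Nat.one_lt_cast.2 hp.one_lt)
  have euler_product :=
    (EulerProduct.summable_and_hasSum_smoothNumbers_prod_primesBelow_geometric norm_f_lt_one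
      (n + 1)).2
  have mem_smoothNumbers : ∀ i ∈ Icc 1 n, i ∈ (n + 1).smoothNumbers := fun i hi ↦
    Nat.mem_smoothNumbers_of_lt (mem_Icc.1 hi).1 (Nat.lt_succ_of_le (mem_Icc.1 hi).2)
  calc log (n + 1) ≤ harmonic n := mod_cast log_add_one_le_harmonic n
    _ = ∑ i ∈ Icc 1 n, f i := by rw [harmonic_eq_sum_Icc]; push_cast; rfl
    _ = ∑ i ∈ (Icc 1 n).subtype (· ∈ (n + 1).smoothNumbers), f i :=
        (sum_subtype_of_mem _ mem_smoothNumbers).symm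
    _ ≤ ∏ p ∈ n.primesLE, (1 - (p : ℝ)⁻¹)⁻¹ :=
        sum_le_hasSum _ (fun i _ ↦ inv_nonneg.2 (Nat.cast_nonneg i)) euler_product

lemma one_sub_inv_pos_of_prime {p : ℕ} (hp : p.Prime) : 0 < 1 - (p : ℝ)⁻¹ :=
  sub_pos.2 (inv_lt_one_of_one_lt₀ (Nat.one_lt_cast.2 hp.one_lt))

lemma prod_primeFactors_one_sub_inv {h : ℕ} (hh : h ≠ 0) :
    ∏ p ∈ h.primeFactors, (1 - (p : ℝ)⁻¹) = h.totient / h := by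
  rw [eq_div_iff (Nat.cast_ne_zero.2 hh), mul_comm]
  have := congrArg (Rat.cast : ℚ → ℝ) h.totient_eq_mul_prod_factors.symm
  push_cast at this
  exact this

lemma prod_primesLE_not_dvd_one_sub_inv_le {h z : ℕ} (hh : h ≠ 0) (hz : z ≠ 0) :
    ∏ p ∈ z.primesLE with ¬ p ∣ h, (1 - (p : ℝ)⁻¹) ≤ h / h.totient / log (z + 1) := by
  have log_pos : 0 < log (z + 1) := by
    refine Real.log_pos ?_
    have : (0 : ℝ) < z := by positivity
    linarith
  have factor_pos : ∀ p ∈ z.primesLE, 0 < 1 - (p : ℝ)⁻¹ := fun p hp ↦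
    one_sub_inv_pos_of_prime (Nat.prime_of_mem_primesLE hp)
  have prod_le : ∏ p ∈ z.primesLE, (1 - (p : ℝ)⁻¹) ≤ 1 / log (z + 1) := by
    rw [le_one_div (prod_pos factor_pos) log_pos, one_div, ← prod_inv_distrib]
    exact log_add_one_le_prod_primesLE_inv z
  have totient_div_le : (h.totient / h : ℝ) ≤
      ∏ p ∈ z.primesLE with p ∣ h, (1 - (p : ℝ)⁻¹) := by
    rw [← prod_primeFactors_one_sub_inv hh]
    refine prod_le_prod_of_subset_of_le_one (fun p hp ↦ ?_) (fun p hp ↦ ?_) fun p _ _ ↦ ?_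
    · obtain ⟨hpz, hph⟩ := mem_filter.1 hp
      exact Nat.mem_primeFactors.2 ⟨Nat.prime_of_mem_primesLE hpz, hph, hh⟩
    · exact (one_sub_inv_pos_of_prime (Nat.prime_of_mem_primeFactors hp)).le
    · exact sub_le_self _ (by positivity)
  have totient_div_pos : (0 : ℝ) < h.totient / h := by
    have := Nat.totient_pos.2 (Nat.pos_of_ne_zero hh)
    positivity
  calc ∏ p ∈ z.primesLE with ¬ p ∣ h, (1 - (p : ℝ)⁻¹)
      ≤ (∏ p ∈ z.primesLE, (1 - (p : ℝ)⁻¹)) / (h.totient / h) := by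
        rw [le_div_iff₀ totient_div_pos, ← prod_filter_mul_prod_filter_not z.primesLE (· ∣ h),
          mul_comm]
        gcongr
        exact prod_nonneg fun p hp ↦ (factor_pos p (mem_filter.1 hp).1).le
    _ ≤ 1 / log (z + 1) / (h.totient / h) := by gcongr
    _ = h / h.totient / log (z + 1) := by field_simp

lemma prod_primesLE_not_dvd_one_sub_two_div_le {h z : ℕ} (hh : h ≠ 0) (hz : z ≠ 0) :
    ∏ p ∈ z.primesLE with ¬ p ∣ h, (1 - 2 / (p : ℝ)) ≤ (h / h.totient / log (z + 1)) ^ 2 := by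
  calc ∏ p ∈ z.primesLE with ¬ p ∣ h, (1 - 2 / (p : ℝ))
      ≤ ∏ p ∈ z.primesLE with ¬ p ∣ h, (1 - (p : ℝ)⁻¹) ^ 2 := by
        refine prod_le_prod (fun p hp ↦ ?_) fun p _ ↦ ?_
        · have : (2 : ℝ) ≤ p := mod_cast Nat.two_le_of_mem_primesLE (mem_filter.1 hp).1
          exact sub_nonneg.2 (div_le_one_of_le₀ this (by positivity))
        · rw [div_eq_mul_inv]
          linarith [sq_nonneg (p : ℝ)⁻¹]
    _ ≤ (h / h.totient / log (z + 1)) ^ 2 := by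
        rw [prod_pow]
        gcongr
        · exact prod_nonneg fun p hp ↦
            (one_sub_inv_pos_of_prime (Nat.prime_of_mem_primesLE (mem_filter.1 hp).1)).le
        · exact prod_primesLE_not_dvd_one_sub_inv_le hh hz

lemma sum_Ico_two_mul_prime_inv_le {y : ℕ} (hy : 2 ≤ y) :
    ∑ p ∈ Ico y (2 * y) with p.Prime, (p : ℝ)⁻¹ ≤ 2 * log 4 / log y := by
  have log_y_pos : 0 < log y := log_pos (by exact_mod_cast hy)
  have y_pos : (0 : ℝ) < y := by positivity
  calc ∑ p ∈ Ico y (2 * y) with p.Prime, (p : ℝ)⁻¹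
      ≤ ∑ p ∈ Ico y (2 * y) with p.Prime, log p / (y * log y) := by
        refine sum_le_sum fun p hp ↦ ?_
        have : (y : ℝ) ≤ p := mod_cast (mem_Ico.1 (mem_filter.1 hp).1).1
        have p_pos : (0 : ℝ) < p := by linarith
        rw [le_div_iff₀ (by positivity), inv_mul_le_iff₀ p_pos]
        gcongr
    _ = (∑ p ∈ Ico y (2 * y) with p.Prime, log p) / (y * log y) := (sum_div _ _ _).symm
    _ ≤ Chebyshev.theta (2 * y) / (y * log y) := by
        gcongr
        rw [← Nat.cast_ofNat (R := ℝ), ← Nat.cast_mul, Chebyshev.theta_eq_sum_primesLE_log]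
        refine sum_le_sum_of_subset_of_nonneg (fun p hp ↦ ?_) fun p _ _ ↦ log_natCast_nonneg p
        simp only [mem_filter, mem_Ico] at hp
        exact Nat.mem_primesLE.2 ⟨hp.1.2.le, hp.2⟩
    _ ≤ log 4 * (2 * y) / (y * log y) := by
        gcongr
        exact Chebyshev.theta_le_log4_mul_x (by positivity)
    _ = 2 * log 4 / log y := by field_simp

lemma sum_primesBelow_two_pow_inv_le (K : ℕ) :
    ∑ p ∈ Nat.primesBelow (2 ^ (K + 1)), (p : ℝ)⁻¹ ≤ 4 * harmonic K := by
  induction K with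
  | zero =>
    rw [zero_add, pow_one, Nat.primesBelow_two]
    simp
  | succ K ih =>
    have log_four : log 4 = 2 * log 2 := by
      rw [show (4 : ℝ) = 2 ^ 2 by norm_num, log_pow, Nat.cast_ofNat]
    have dyadic_block := sum_Ico_two_mul_prime_inv_le (Nat.le_self_pow K.succ_ne_zero 2)
    have split : ∑ p ∈ Nat.primesBelow (2 ^ (K + 1 + 1)), (p : ℝ)⁻¹ =
        ∑ p ∈ Nat.primesBelow (2 ^ (K + 1)), (p : ℝ)⁻¹ +
          ∑ p ∈ Ico ((2 : ℕ) ^ (K + 1)) (2 * 2 ^ (K + 1)) with p.Prime, (p : ℝ)⁻¹ := by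
      simp only [Nat.primesBelow, sum_filter, range_eq_Ico, pow_succ' 2 (K + 1)]
      rw [sum_Ico_consecutive _ (Nat.zero_le _) (Nat.le_mul_of_pos_left _ two_pos)]
    have block_eq : 2 * log 4 / log (2 ^ (K + 1) : ℕ) = 4 * ((K + 1 : ℕ) : ℝ)⁻¹ := by
      push_cast
      rw [log_four, log_pow]
      push_cast
      field_simp
      norm_num
    rw [split, harmonic_succ, Rat.cast_add, mul_add]
    refine add_le_add ih (dyadic_block.trans_eq (block_eq.trans ?_))
    push_cast
    rfl

theorem sum_primesLE_inv_le {n : ℕ} (hn : 2 ≤ n) :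
    ∑ p ∈ n.primesLE, (p : ℝ)⁻¹ ≤ 4 * (2 + log (log n)) := by
  have log_n_pos : 0 < log n := log_pos (by exact_mod_cast hn)
  have K_pos : 0 < Nat.log 2 n := Nat.log_pos one_lt_two hn
  have log_K_le : log (Nat.log 2 n) ≤ log (log n) + 1 := by
    calc log (Nat.log 2 n) ≤ log (log n * exp 1) := by
          refine log_le_log (mod_cast K_pos) ((natLog_le_logb n 2).trans ?_)
          rw [← log_div_log, Nat.cast_ofNat, div_le_iff₀ (log_pos one_lt_two), mul_assoc]
          refine le_mul_of_one_le_right log_n_pos.le ?_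
          nlinarith [log_two_gt_d9, exp_one_gt_d9]
      _ = log (log n) + 1 := by rw [log_mul log_n_pos.ne' (exp_ne_zero _), log_exp]
  calc ∑ p ∈ n.primesLE, (p : ℝ)⁻¹
      ≤ ∑ p ∈ Nat.primesBelow (2 ^ (Nat.log 2 n + 1)), (p : ℝ)⁻¹ := by
        refine sum_le_sum_of_subset_of_nonneg (fun p hp ↦ ?_) fun _ _ _ ↦ by positivity
        obtain ⟨hpn, hp⟩ := Nat.mem_primesLE.1 hp
        exact Nat.mem_primesBelow.2 ⟨hpn.trans_lt (Nat.lt_pow_succ_log_self one_lt_two n), hp⟩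
    _ ≤ 4 * harmonic (Nat.log 2 n) := sum_primesBelow_two_pow_inv_le _
    _ ≤ 4 * (1 + log (Nat.log 2 n)) := by gcongr; exact harmonic_le_one_add_log _
    _ ≤ 4 * (2 + log (log n)) := by linarith

end PrimeSums

section PrimePairs

lemma abs_card_range_forall_dvd_or_dvd_add_sub_le {h : ℕ} (I : Finset ℕ)
    (hI : ∀ p ∈ I, p.Prime ∧ ¬ p ∣ h) (N : ℕ) :
    |(#{a ∈ range N | ∀ p ∈ I, p ∣ a ∨ p ∣ a + h} : ℝ) - N * ∏ p ∈ I, 2 / (p : ℝ)| ≤ 2 ^ #I := by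
  have (p : I) : NeZero (p : ℕ) := ⟨(hI p p.2).1.ne_zero⟩
  have coprime : Pairwise (Function.onFun Nat.Coprime fun p : I ↦ (p : ℕ)) := fun p r hpr ↦
    (Nat.coprime_primes (hI p p.2).1 (hI r r.2).1).2 (Subtype.coe_injective.ne hpr)
  let Ω (p : I) : Finset (ZMod p) := {0, -(h : ZMod p)}
  have card_Ω (p : I) : #(Ω p) = 2 := by
    refine card_pair fun eq ↦ (hI p p.2).2 ?_
    rwa [eq_comm, neg_eq_zero, ZMod.natCast_eq_zero_iff] at eq
  have mem_Ω (a : ℕ) (p : I) : (a : ZMod p) ∈ Ω p ↔ (p : ℕ) ∣ a ∨ (p : ℕ) ∣ a + h := by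
    rw [mem_insert, mem_singleton, eq_neg_iff_add_eq_zero, ← Nat.cast_add,
      ZMod.natCast_eq_zero_iff, ZMod.natCast_eq_zero_iff]
  have prod_two_div : ∏ p : I, (2 / (p : ℕ) : ℝ) = ∏ p ∈ I, 2 / (p : ℝ) :=
    prod_coe_sort I fun p ↦ (2 / p : ℝ)
  simpa only [mem_Ω, card_Ω, Subtype.forall, Nat.cast_ofNat, prod_two_div, prod_const, card_univ,
    Fintype.card_coe] using
      abs_card_range_forall_natCast_mem_sub_le (fun p : I ↦ (p : ℕ)) coprime Ω N

lemma card_primePairs_le_add_card_sifted {h z N : ℕ} {T : Finset ℕ}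
    (hT : ∀ p ∈ T, p.Prime ∧ p ≤ z) :
    #{p ∈ Icc 1 N | p.Prime ∧ (p + h).Prime} ≤
      z + #{a ∈ range (N + 1) | ∀ p ∈ T, ¬ (p ∣ a ∨ p ∣ a + h)} := by
  have subset : {p ∈ Icc 1 N | p.Prime ∧ (p + h).Prime} ⊆
      Icc 1 z ∪ {a ∈ range (N + 1) | ∀ p ∈ T, ¬ (p ∣ a ∨ p ∣ a + h)} := by
    intro a ha
    obtain ⟨haN, ha_prime, hah_prime⟩ := mem_filter.1 ha
    obtain ⟨one_le, le_N⟩ := mem_Icc.1 haN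
    rcases le_or_gt a z with haz | hza
    · exact mem_union_left _ (mem_Icc.2 ⟨one_le, haz⟩)
    refine mem_union_right _ (mem_filter.2 ⟨mem_range_succ_iff.2 le_N, fun p hp ↦ ?_⟩)
    obtain ⟨p_prime, hpz⟩ := hT p hp
    rintro (hpa | hpah)
    · have := (Nat.prime_dvd_prime_iff_eq p_prime ha_prime).1 hpa
      lia
    · have := (Nat.prime_dvd_prime_iff_eq p_prime hah_prime).1 hpah
      lia
  calc #{p ∈ Icc 1 N | p.Prime ∧ (p + h).Prime}
      ≤ #(Icc 1 z ∪ {a ∈ range (N + 1) | ∀ p ∈ T, ¬ (p ∣ a ∨ p ∣ a + h)}) := card_le_card subset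
    _ ≤ #(Icc 1 z) + #{a ∈ range (N + 1) | ∀ p ∈ T, ¬ (p ∣ a ∨ p ∣ a + h)} := card_union_le _ _
    _ = z + #{a ∈ range (N + 1) | ∀ p ∈ T, ¬ (p ∣ a ∨ p ∣ a + h)} := by
        rw [Nat.card_Icc, Nat.add_sub_cancel]

lemma exp_one_mul_sum_two_div_le {z : ℕ} (hz : 2 ≤ z) (h : ℕ) :
    exp 1 * ∑ p ∈ z.primesLE with ¬ p ∣ h, 2 / (p : ℝ) ≤ 48 + 24 * log (log z) := by
  have sum_le : ∑ p ∈ z.primesLE with ¬ p ∣ h, 2 / (p : ℝ) ≤ 2 * (4 * (2 + log (log z))) := by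
    calc ∑ p ∈ z.primesLE with ¬ p ∣ h, 2 / (p : ℝ)
        ≤ ∑ p ∈ z.primesLE, 2 / (p : ℝ) :=
          sum_le_sum_of_subset_of_nonneg (filter_subset _ _) fun _ _ _ ↦ by positivity
      _ ≤ 2 * (4 * (2 + log (log z))) := by
          simp only [div_eq_mul_inv, ← mul_sum]
          gcongr
          exact sum_primesLE_inv_le hz
  have sum_nonneg : 0 ≤ ∑ p ∈ z.primesLE with ¬ p ∣ h, 2 / (p : ℝ) := by positivity
  nlinarith [exp_one_lt_three]

theorem card_primePairs_le_brun {h z m : ℕ} (hh : h ≠ 0) (hz : 2 ≤ z) (hm : Even m) (N : ℕ) :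
    #{p ∈ Icc 1 N | p.Prime ∧ (p + h).Prime} ≤
      z + ((N + 1) * ((h / h.totient / log (z + 1)) ^ 2 + exp (48 + 24 * log (log z) - m)) +
        exp 2 * z ^ m) := by
  let T := {p ∈ z.primesLE | ¬ p ∣ h}
  have prime_of_mem {p : ℕ} (hp : p ∈ T) : p.Prime ∧ ¬ p ∣ h :=
    ⟨Nat.prime_of_mem_primesLE (mem_filter.1 hp).1, (mem_filter.1 hp).2⟩
  have prime_le_of_mem : ∀ p ∈ T, p.Prime ∧ p ≤ z := fun p hp ↦
    ⟨(prime_of_mem hp).1, Nat.le_of_mem_primesLE (mem_filter.1 hp).1⟩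
  have card_T_le : (#T : ℝ) ≤ z := by
    have subset : T ⊆ Icc 1 z := fun p hp ↦
      mem_Icc.2 ⟨(prime_of_mem hp).1.one_le, (prime_le_of_mem p hp).2⟩
    exact_mod_cast (card_le_card subset).trans_eq (Nat.card_Icc 1 z)
  have sifted_le := card_sifted_le_brun (range (N + 1)) T (fun p a ↦ p ∣ a ∨ p ∣ a + h)
    (fun p ↦ 2 / (p : ℝ)) hm (X := (N + 1 : ℕ)) (by positivity) zero_le_two
    (fun _ _ ↦ by positivity) (mod_cast by lia) card_T_le fun I hI ↦
      abs_card_range_forall_dvd_or_dvd_add_sub_le I (fun p hp ↦ prime_of_mem (hI hp)) (N + 1)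
  calc (#{p ∈ Icc 1 N | p.Prime ∧ (p + h).Prime} : ℝ)
      ≤ z + #{a ∈ range (N + 1) | ∀ p ∈ T, ¬ (p ∣ a ∨ p ∣ a + h)} := by
        exact_mod_cast card_primePairs_le_add_card_sifted prime_le_of_mem
    _ ≤ z + ((N + 1 : ℕ) * (∏ p ∈ T, (1 - 2 / (p : ℝ)) +
          exp (exp 1 * ∑ p ∈ T, 2 / (p : ℝ) - m)) + exp 2 * z ^ m) := by gcongr
    _ ≤ _ := by
        push_cast
        gcongr
        · exact prod_primesLE_not_dvd_one_sub_two_div_le hh (by lia)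
        · exact exp_one_mul_sum_two_div_le hz h

-- With `l = log (log x)`, any `m ≥ 26 l` suffices. Rounding up to an even number can be done within
-- `28 l`, so `z = exp (log x / (56 l))` gives `z ^ m ≤ exp (log x / 2)`.
lemma exists_sieve_parameters {x : ℝ} (hx : 1 ≤ x) (one_le : 1 ≤ log (log x))
    (le_log : 56 * log (log x) ≤ log x) :
    ∃ z m : ℕ, 2 ≤ z ∧ Even m ∧ log x / (56 * log (log x)) ≤ log (z + 1) ∧
      24 * log (log z) + 2 * log (log x) ≤ m ∧ z ≤ √x ∧ (z : ℝ) ^ m ≤ √x := by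
  set l := log (log x)
  have log_pos : 0 < log x := by linarith
  have sqrt_eq : √x = exp (log x / 2) := by rw [exp_half, exp_log (by linarith)]
  have one_le_u : 1 ≤ log x / (56 * l) := (one_le_div (by positivity)).2 le_log
  have u_le : log x / (56 * l) ≤ log x / 2 := by gcongr; linarith
  let z := ⌊exp (log x / (56 * l))⌋₊
  have z_le : (z : ℝ) ≤ exp (log x / (56 * l)) := Nat.floor_le (exp_nonneg _)
  have two_le_z : 2 ≤ z := by
    refine Nat.le_floor ?_
    push_cast
    linarith [add_one_le_exp (log x / (56 * l))]
  have log_z_pos : 0 < log z := Real.log_pos (by exact_mod_cast two_le_z)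
  have log_log_z_le : log (log z) ≤ l := by
    refine log_le_log log_z_pos ?_
    linarith [(log_le_iff_le_exp (by positivity)).2 z_le]
  have le_m : 13 * l ≤ ⌈13 * l⌉₊ := Nat.le_ceil _
  have m_lt : ⌈13 * l⌉₊ < 13 * l + 1 := Nat.ceil_lt_add_one (by positivity)
  refine ⟨z, 2 * ⌈13 * l⌉₊, two_le_z, even_two_mul _, ?_, ?_, ?_, ?_⟩
  · rw [le_log_iff_exp_le (by positivity)]
    exact (Nat.lt_floor_add_one _).le
  · push_cast
    linarith
  · rw [sqrt_eq]
    exact z_le.trans (exp_le_exp.2 u_le)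
  · calc (z : ℝ) ^ (2 * ⌈13 * l⌉₊) ≤ exp (log x / (56 * l)) ^ (2 * ⌈13 * l⌉₊) := by gcongr
      _ = exp ((2 * ⌈13 * l⌉₊ : ℕ) * (log x / (56 * l))) := (exp_nat_mul _ _).symm
      _ ≤ exp (28 * l * (log x / (56 * l))) := by
        gcongr
        push_cast
        linarith
      _ = √x := by
        rw [sqrt_eq]
        congr 1
        field_simp
        norm_num

theorem card_primePairs_le_log_log_sq_div_log_sq {h : ℕ} (hh : h ≠ 0) {x : ℝ} (hx : 1 ≤ x)
    (one_le : 1 ≤ log (log x)) (le_log : 56 * log (log x) ≤ log x)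
    (sqrt_le : √x ≤ x / log x ^ 2) :
    #{p ∈ Icc 1 ⌊x⌋₊ | p.Prime ∧ (p + h).Prime} ≤
      (2 * ((56 * (h / h.totient)) ^ 2 + exp 48) + 1 + exp 2) *
        (x * log (log x) ^ 2 / log x ^ 2) := by
  obtain ⟨z, m, two_le_z, m_even, le_log_z, le_m, z_le, pow_le⟩ :=
    exists_sieve_parameters hx one_le le_log
  have log_pos : 0 < log x := by linarith
  have floor_add_one_le : (⌊x⌋₊ + 1 : ℝ) ≤ 2 * x := by
    linarith [Nat.floor_le (zero_le_one.trans hx)]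
  have log_z_nonneg : 0 ≤ log (z + 1) := le_trans (by positivity) le_log_z
  have main_term_le : h / h.totient / log (z + 1) ≤
      h / h.totient / (log x / (56 * log (log x))) := by gcongr
  have exp_le : exp (48 + 24 * log (log z) - m) ≤ exp 48 / log x ^ 2 := by
    calc exp (48 + 24 * log (log z) - m) ≤ exp (48 - 2 * log (log x)) :=
          exp_le_exp.2 (by linarith)
      _ = exp 48 / log x ^ 2 := by
        rw [exp_sub, ← Nat.cast_ofNat (n := 2), exp_nat_mul, exp_log log_pos]
  have one_le_sq : 1 ≤ log (log x) ^ 2 := one_le_pow₀ one_le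
  calc (#{p ∈ Icc 1 ⌊x⌋₊ | p.Prime ∧ (p + h).Prime} : ℝ)
      ≤ z + ((⌊x⌋₊ + 1) * ((h / h.totient / log (z + 1)) ^ 2 +
          exp (48 + 24 * log (log z) - m)) + exp 2 * z ^ m) :=
        card_primePairs_le_brun hh two_le_z m_even _
    _ ≤ √x + (2 * x * ((h / h.totient / (log x / (56 * log (log x)))) ^ 2 +
          exp 48 / log x ^ 2) + exp 2 * √x) := by gcongr
    _ ≤ x / log x ^ 2 + (2 * x * ((h / h.totient / (log x / (56 * log (log x)))) ^ 2 +
          exp 48 / log x ^ 2) + exp 2 * (x / log x ^ 2)) := by gcongr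
    _ = x / log x ^ 2 * (2 * (56 * (h / h.totient)) ^ 2 * log (log x) ^ 2 +
          (2 * exp 48 + 1 + exp 2) * 1) := by
        field_simp
        ring
    _ ≤ x / log x ^ 2 * (2 * (56 * (h / h.totient)) ^ 2 * log (log x) ^ 2 +
          (2 * exp 48 + 1 + exp 2) * log (log x) ^ 2) := by gcongr
    _ = _ := by ring

lemma eventually_sqrt_le_div_log_sq : ∀ᶠ x : ℝ in atTop, √x ≤ x / log x ^ 2 := by
  filter_upwards [(isLittleO_pow_log_id_atTop (n := 4)).eventuallyLE, eventually_gt_atTop 1]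
    with x pow_le hx
  have log_pos : 0 < log x := log_pos hx
  have log_sq_le : log x ^ 2 ≤ √x := by
    refine le_sqrt_of_sq_le ?_
    rw [← pow_mul]
    simpa [abs_of_pos log_pos, abs_of_pos (zero_lt_one.trans hx)] using pow_le
  rw [le_div_iff₀ (by positivity)]
  calc √x * log x ^ 2 ≤ √x * √x := by gcongr
    _ = x := mul_self_sqrt (by linarith)

lemma eventually_const_mul_log_le (c : ℝ) : ∀ᶠ x : ℝ in atTop, c * log x ≤ x := by
  filter_upwards [(isLittleO_log_id_atTop.const_mul_left c).eventuallyLE, eventually_ge_atTop 0]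
    with x log_le hx
  exact (le_norm_self _).trans (log_le.trans_eq (norm_of_nonneg hx))

theorem isBigO_card_primePairs {h : ℕ} (hh : h ≠ 0) :
    (fun x : ℝ ↦ (#{p ∈ Icc 1 ⌊x⌋₊ | p.Prime ∧ (p + h).Prime} : ℝ)) =O[atTop]
      fun x ↦ x * log (log x) ^ 2 / log x ^ 2 := by
  refine Asymptotics.IsBigO.of_bound (2 * ((56 * (h / h.totient)) ^ 2 + exp 48) + 1 + exp 2) ?_
  filter_upwards [eventually_ge_atTop 1,
    (tendsto_log_atTop.comp tendsto_log_atTop).eventually_ge_atTop 1,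
    tendsto_log_atTop.eventually (eventually_const_mul_log_le 56),
    eventually_sqrt_le_div_log_sq] with x hx one_le le_log sqrt_le
  rw [norm_of_nonneg (by positivity), norm_of_nonneg (by positivity)]
  exact card_primePairs_le_log_log_sq_div_log_sq hh hx one_le le_log sqrt_le

end PrimePairs

end

/-- For every positive integer `n`, the number of prime pairs `p, p + 2n` with
`p ≤ x` is `O(x (log log x)² / (log x)²)`. -/
theorem primePairCounting_bigO (n : ℕ) (hn : 0 < n) :
    ∃ C : ℝ, 0 < C ∧ ∃ x₀ : ℝ, 3 ≤ x₀ ∧ ∀ x : ℝ, x₀ ≤ x →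
      (primePairCounting n x : ℝ) ≤
        C * x * (Real.log (Real.log x)) ^ 2 / (Real.log x) ^ 2 := by
  obtain ⟨C, hC, bound⟩ := (isBigO_card_primePairs (mul_pos two_pos hn).ne').exists_pos
  obtain ⟨x₁, hx₁⟩ := Filter.eventually_atTop.1 bound.bound
  refine ⟨C, hC, max 3 x₁, le_max_left _ _, fun x hx ↦ ?_⟩
  have x_nonneg : 0 ≤ x := zero_le_three.trans ((le_max_left _ _).trans hx)
  have := hx₁ x ((le_max_right _ _).trans hx)
  rwa [Real.norm_of_nonneg (by positivity), Real.norm_of_nonneg (by positivity), ← mul_div_assoc,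
    ← mul_assoc] at this
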